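/- arXiv:1903.00750 — 6 statements merged into one kernel-verified Lean document; each statement's English description precedes it below -/
import Mathlib

section
/- Let G be a simple graph on a nonempty finite vertex set V with no isolated vertices, and let w assign a real weight to each edge of G. Then there exists an edge cover F of G such that (i) the maximum weight of an edge of F equals max over vertices v of (min over edges e of G incident to v of w(e)), i.e., F is bottleneck-optimal among all edge covers, and (ii) every edge of F has an endpoint that belongs to no other edge of F (so the connected components of the graph (V,F) are stars). -/
/-- `F` is an edge cover of the simple graph `G`: a set of edges of `G` such that
every vertex belongs to at least one edge of `F`. -/
def IsEdgeCover {V : Type*} (G : SimpleGraph V) (F : Set (Sym2 V)) : Prop :=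
  F ⊆ G.edgeSet ∧ ∀ v : V, ∃ e ∈ F, v ∈ e

/-- There is an edge cover `F` of `G` that is bottleneck-optimal (its maximum edge weight
equals the max over vertices of the min weight of an incident edge) and such that every edge
of `F` has an endpoint belonging to no other edge of `F` (the components of `(V,F)` are stars). -/
theorem bottleneck_star_edge_cover_exists {V : Type*} [Fintype V] [Nonempty V]
    (G : SimpleGraph V) (hiso : ∀ v : V, ∃ u : V, G.Adj v u) (w : Sym2 V → ℝ) :
    ∃ F : Set (Sym2 V), IsEdgeCover G F ∧
      sSup (w '' F) = (⨆ v : V, sInf {x : ℝ | ∃ e ∈ G.edgeSet, v ∈ e ∧ x = w e}) ∧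
      ∀ e ∈ F, ∃ v ∈ e, ∀ e' ∈ F, v ∈ e' → e' = e := by
  classical
  set S : V → Set ℝ := fun v => {x : ℝ | ∃ e ∈ G.edgeSet, v ∈ e ∧ x = w e} with hS
  have hfin : ∀ v, (S v).Finite := fun v =>
    (Set.finite_range w).subset (by rintro x ⟨e, -, -, rfl⟩; exact ⟨e, rfl⟩)
  have hne : ∀ v, (S v).Nonempty := fun v => by
    obtain ⟨u, hu⟩ := hiso v
    exact ⟨_, s(v, u), hu, Sym2.mem_mk_left v u, rfl⟩
  change ∃ F : Set (Sym2 V), IsEdgeCover G F ∧ sSup (w '' F) = (⨆ v : V, sInf (S v)) ∧ _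
  have hbdd : BddAbove (Set.range fun v => sInf (S v)) := (Set.finite_range _).bddAbove
  set M := ⨆ v : V, sInf (S v) with hM
  obtain ⟨v0, hv0⟩ : ∃ v0, sInf (S v0) = M := exists_eq_ciSup_of_finite
  let P : Set (Sym2 V) → Prop := fun F => IsEdgeCover G F ∧ ∀ e ∈ F, w e ≤ M
  have hP0 : P {e | e ∈ G.edgeSet ∧ w e ≤ M} := by
    refine ⟨⟨fun e he => he.1, fun v => ?_⟩, fun e he => he.2⟩
    obtain ⟨e, he, hve, hw⟩ := (hne v).csInf_mem (hfin v)
    exact ⟨e, ⟨he, hw ▸ le_ciSup hbdd v⟩, hve⟩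
  obtain ⟨F, hF⟩ := (Set.toFinite {F | P F}).exists_minimal ⟨_, hP0⟩
  have hFP : P F := hF.prop
  refine ⟨F, hFP.1, ?_, ?_⟩
  · obtain ⟨e, he, hve⟩ := hFP.1.2 v0
    have h1 : M ≤ w e := hv0 ▸ csInf_le (hfin v0).bddBelow ⟨e, hFP.1.1 he, hve, rfl⟩
    apply le_antisymm
    · refine csSup_le (Set.Nonempty.image w ⟨e, he⟩) ?_
      rintro _ ⟨e', he', rfl⟩
      exact hFP.2 e' he'
    · exact h1.trans (le_csSup (Set.toFinite _).bddAbove ⟨e, he, rfl⟩)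
  · intro e he
    by_contra hcon
    push Not at hcon
    have hP' : P (F \ {e}) := by
      refine ⟨⟨fun x hx => hFP.1.1 hx.1, fun v => ?_⟩, fun x hx => hFP.2 x hx.1⟩
      obtain ⟨e', he', hv⟩ := hFP.1.2 v
      by_cases h : e' = e
      · subst h
        obtain ⟨e2, h2, hv2, hn⟩ := hcon v hv
        exact ⟨e2, ⟨h2, hn⟩, hv2⟩
      · exact ⟨e', ⟨he', h⟩, hv⟩
    exact (hF.le_of_le hP' Set.sdiff_subset he).2 rfl
end

section
/- Let (V,d) be a nonempty finite metric space, let G be a simple graph on V with no isolated vertices, and let k ≥ 1. Let b = max over vertices v of (min over G-neighbors u of v of d(u,v)), and let R be the minimum radius over all k-clusterings of (V,d). Then there exists a k-clustering (σ, c) of (V,d) such that every vertex v has a G-neighbor u with σ(u) = σ(v), and whose radius is at most b + R. -/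
theorem star_forest_aux {V : Type*} (H : V → V → Prop) (hs : ∀ u v, H u v → H v u)
    (hne : ∀ u, ¬ H u u) (hiso : ∀ v, ∃ u, H v u) (S : Finset V) :
    ∃ (T : Set V) (f : V → V), (∀ v ∈ S, v ∈ T) ∧
      ∀ v ∈ T, f v ∈ T ∧ f (f v) = f v ∧ (v = f v ∨ H v (f v)) ∧
        ∃ w ∈ T, w ≠ f v ∧ f w = f v := by
  classical
  induction S using Finset.induction_on with
  | empty => exact ⟨∅, id, by simp, by simp⟩
  | insert s S _ ih =>
    obtain ⟨T, f, hST, hf⟩ := ih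
    by_cases hsT : s ∈ T
    · exact ⟨T, f, by grind, hf⟩
    obtain ⟨u, hu⟩ := hiso s
    have hsu : s ≠ u := fun h => hne u (h ▸ hu)
    have hus := hs _ _ hu
    by_cases huT : u ∈ T
    · by_cases hfu : f u = u
      · refine ⟨insert s T, fun x => if x = s then u else f x, by grind, ?_⟩
        intro v hv
        rcases hv with rfl | hv
        · exact ⟨by grind, by grind, by grind, v, by grind⟩
        · obtain ⟨h1, h2, h3, w, h4, h5, h6⟩ := hf v hv
          exact ⟨by grind, by grind, by grind, w, by grind⟩
      · obtain ⟨g1, g2, g3, -⟩ := hf u huT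
        have g4 := hs _ _ (g3.resolve_left (Ne.symm hfu))
        by_cases hw : ∃ w ∈ T, w ≠ f u ∧ w ≠ u ∧ f w = f u
        · obtain ⟨w0, k1, k2, k3, k4⟩ := hw
          have hnl : ∀ x ∈ T, f x ≠ u := by
            intro x hx hxu
            have := (hf x hx).2.1
            grind
          refine ⟨insert s T, fun x => if x = s ∨ x = u then u else f x, by grind, ?_⟩
          intro v hv
          by_cases hvs : v = s ∨ v = u
          · exact ⟨by grind, by grind, by grind, s, by grind⟩
          · have hvT : v ∈ T := by grind
            obtain ⟨h1, h2, h3, w, h4, h5, h6⟩ := hf v hvT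
            have := hnl v hvT
            by_cases hwu : w = u
            · exact ⟨by grind, by grind, by grind, w0, by grind⟩
            · exact ⟨by grind, by grind, by grind, w, by grind⟩
        · push Not at hw
          have hnl : ∀ x ∈ T, f x ≠ u := by
            intro x hx hxu
            have := (hf x hx).2.1
            grind
          refine ⟨insert s T, fun x => if x = s ∨ x = u ∨ x = f u then u else f x,
            by grind, ?_⟩
          intro v hv
          by_cases hvs : v = s ∨ v = u ∨ v = f u
          · exact ⟨by grind, by grind, by grind, s, by grind⟩
          · have hvT : v ∈ T := by grind
            obtain ⟨h1, h2, h3, w, h4, h5, h6⟩ := hf v hvT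
            have := hnl v hvT
            have h7 : f v ≠ f u := fun h => by
              have := hw v hvT
              grind
            exact ⟨by grind, by grind, by grind, w, by grind⟩
    · refine ⟨insert s (insert u T), fun x => if x = s ∨ x = u then u else f x, by grind, ?_⟩
      intro v hv
      by_cases hvs : v = s ∨ v = u
      · exact ⟨by grind, by grind, by grind, s, by grind⟩
      · have hvT : v ∈ T := by grind
        obtain ⟨h1, h2, h3, w, h4, h5, h6⟩ := hf v hvT
        exact ⟨by grind, by grind, by grind, w, by grind⟩

/-- There is a `k`-clustering in which every vertex has a `G`-neighbor in its own cluster and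
whose radius is at most `b + R`, where `b` is the bottleneck nearest-neighbor distance and `R`
is the optimal `k`-center radius. -/
theorem resource_sharing_clustering_exists {V : Type*} [MetricSpace V] [Fintype V] [Nonempty V]
    (G : SimpleGraph V) (hiso : ∀ v : V, ∃ u : V, G.Adj v u) (k : ℕ) (hk : 1 ≤ k) :
    ∃ (σ : V → Fin k) (c : Fin k → V),
      (∀ v : V, ∃ u : V, G.Adj v u ∧ σ u = σ v) ∧
      (⨆ v : V, dist v (c (σ v))) ≤
        (⨆ v : V, sInf {x : ℝ | ∃ u : V, G.Adj v u ∧ x = dist u v}) +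
          sInf {r : ℝ | ∃ (σ' : V → Fin k) (c' : Fin k → V),
            r = ⨆ v : V, dist v (c' (σ' v))} := by
  classical
  set b := ⨆ v : V, sInf {x : ℝ | ∃ u : V, G.Adj v u ∧ x = dist u v} with hb
  have hnear : ∀ v, ∃ u, G.Adj v u ∧ dist u v ≤ b := by
    intro v
    have hfin : {x : ℝ | ∃ u : V, G.Adj v u ∧ x = dist u v}.Finite :=
      (Set.finite_range (fun u => dist u v)).subset (by rintro x ⟨u, -, rfl⟩; exact ⟨u, rfl⟩)
    have hne : {x : ℝ | ∃ u : V, G.Adj v u ∧ x = dist u v}.Nonempty := by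
      obtain ⟨u, hu⟩ := hiso v
      exact ⟨_, u, hu, rfl⟩
    obtain ⟨u, hu, h⟩ := hne.csInf_mem hfin
    refine ⟨u, hu, ?_⟩
    rw [← h, hb]
    exact le_ciSup (f := fun v : V => sInf {x : ℝ | ∃ u : V, G.Adj v u ∧ x = dist u v})
      (Set.finite_range _).bddAbove v
  have hb0 : 0 ≤ b := by
    obtain ⟨u, -, h⟩ := hnear (Classical.arbitrary V)
    exact dist_nonneg.trans h
  have hR : ∃ (σ' : V → Fin k) (c' : Fin k → V), sInf {r : ℝ | ∃ (σ' : V → Fin k)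
      (c' : Fin k → V), r = ⨆ v : V, dist v (c' (σ' v))} = ⨆ v : V, dist v (c' (σ' v)) := by
    have hfin : {r : ℝ | ∃ (σ' : V → Fin k) (c' : Fin k → V),
        r = ⨆ v : V, dist v (c' (σ' v))}.Finite :=
      (Set.finite_range (fun p : (V → Fin k) × (Fin k → V) =>
        ⨆ v : V, dist v (p.2 (p.1 v)))).subset
        (by rintro x ⟨s, c, rfl⟩; exact ⟨(s, c), rfl⟩)
    have hne : {r : ℝ | ∃ (σ' : V → Fin k) (c' : Fin k → V),
        r = ⨆ v : V, dist v (c' (σ' v))}.Nonempty :=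
      ⟨_, fun _ => ⟨0, hk⟩, fun _ => Classical.arbitrary V, rfl⟩
    exact hne.csInf_mem hfin
  obtain ⟨σ', c', hR⟩ := hR
  rw [hR]
  obtain ⟨T, f, hT, hf⟩ := star_forest_aux (fun u v => G.Adj u v ∧ dist u v ≤ b)
    (fun u v h => ⟨h.1.symm, by rw [dist_comm]; exact h.2⟩) (fun u h => G.irrefl h.1)
    (fun v => by
      obtain ⟨u, hu, h⟩ := hnear v
      exact ⟨u, hu, by rw [dist_comm]; exact h⟩) Finset.univ
  refine ⟨fun v => σ' (f v), c', ?_, ?_⟩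
  · intro v
    obtain ⟨h1, h2, h3, w, h4, h5, h6⟩ := hf v (hT v (Finset.mem_univ v))
    rcases h3 with h3 | h3
    · obtain ⟨-, -, k3, -⟩ := hf w h4
      refine ⟨w, ?_, by simp only [h6]⟩
      rw [h6, ← h3] at k3
      rw [← h3] at h5
      exact (k3.resolve_left h5).1.symm
    · exact ⟨f v, h3.1, by simp only [h2]⟩
  · refine ciSup_le fun v => ?_
    obtain ⟨-, -, h3, -⟩ := hf v (hT v (Finset.mem_univ v))
    have h1 : dist v (f v) ≤ b := by
      rcases h3 with h3 | h3
      · rw [← h3, dist_self]; exact hb0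
      · exact h3.2
    have h2 : dist (f v) (c' (σ' (f v))) ≤ ⨆ v : V, dist v (c' (σ' v)) :=
      le_ciSup (f := fun v : V => dist v (c' (σ' v))) (Set.finite_range _).bddAbove (f v)
    exact (dist_triangle _ _ _).trans (add_le_add h1 h2)
end

section
/- Let (V,d) be a nonempty finite metric space and let F be a set of unordered pairs of distinct points of V such that every point of V lies in some pair of F, every pair of F has an endpoint lying in no other pair of F (the components of (V,F) are stars), and d(u,v) ≤ b for every {u,v} in F. Let c : Fin k → V be such that every v in V satisfies min over i of d(v, c(i)) ≤ R. Then there exists σ : V → Fin k such that σ(u) = σ(v) whenever {u,v} is in F, and d(v, c(σ(v))) ≤ b + R for every v in V. -/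
/-- Assigning each star of a star-shaped edge cover entirely to the cluster of a center near
its star center keeps every pair co-clustered while increasing the radius by at most `b`. -/
theorem star_cover_cluster_assignment {V : Type*} [MetricSpace V] [Fintype V] [Nonempty V]
    (F : Set (Sym2 V)) (hdiag : ∀ e ∈ F, ¬ e.IsDiag)
    (hcover : ∀ v : V, ∃ e ∈ F, v ∈ e)
    (hstar : ∀ e ∈ F, ∃ v ∈ e, ∀ e' ∈ F, v ∈ e' → e' = e)
    (b : ℝ) (hb : ∀ u v : V, s(u, v) ∈ F → dist u v ≤ b)
    {k : ℕ} (c : Fin k → V) (R : ℝ) (hc : ∀ v : V, ∃ i : Fin k, dist v (c i) ≤ R) :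
    ∃ σ : V → Fin k,
      (∀ u v : V, s(u, v) ∈ F → σ u = σ v) ∧
      ∀ v : V, dist v (c (σ v)) ≤ b + R := by
  have h1 : ∀ e : Sym2 V, ∃ x y : V, e ∈ F → e = s(x, y) ∧ ∀ e' ∈ F, y ∈ e' → e' = e := by
    intro e
    by_cases he : e ∈ F
    · obtain ⟨y, hy, hu⟩ := hstar e he
      obtain ⟨x, hx⟩ := hy
      exact ⟨x, y, fun _ => ⟨by rw [hx, Sym2.eq_swap], hu⟩⟩
    · obtain ⟨v⟩ := ‹Nonempty V›
      exact ⟨v, v, fun h => absurd h he⟩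
  choose p q hpq using h1
  choose E hEF hE using hcover
  choose n hn using hc
  have key : ∀ e ∈ F, ∀ v ∈ e, p (E v) = p e := by
    intro e he v hv
    by_cases h : E v = e
    · rw [h]
    · have h2 := hpq e he
      have h3 := hpq (E v) (hEF v)
      have hv1 : v = p e ∨ v = q e := by
        have := hv
        rw [h2.1] at this
        exact Sym2.mem_iff.1 this
      have hv2 : v = p (E v) ∨ v = q (E v) := by
        have := hE v
        rw [h3.1] at this
        exact Sym2.mem_iff.1 this
      rcases hv1 with hv1 | hv1
      · rcases hv2 with hv2 | hv2
        · exact hv2.symm.trans hv1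
        · exact absurd (h3.2 e he (hv2 ▸ hv)).symm h
      · exact absurd (h2.2 (E v) (hEF v) (hv1 ▸ hE v)) h
  refine ⟨fun v => n (p (E v)), ?_, ?_⟩
  · intro u v huv
    show n (p (E u)) = n (p (E v))
    rw [key _ huv u (Sym2.mem_mk_left u v), key _ huv v (Sym2.mem_mk_right u v)]
  · intro v
    have h3 := (hpq (E v) (hEF v)).1
    have hd : dist (p (E v)) (q (E v)) ≤ b := hb _ _ (h3 ▸ hEF v)
    have hv2 : v = p (E v) ∨ v = q (E v) := by
      have := hE v
      rw [h3] at this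
      exact Sym2.mem_iff.1 this
    have hvb : dist v (p (E v)) ≤ b := by
      rcases hv2 with hv2 | hv2
      · rw [← hv2, dist_self]
        exact dist_nonneg.trans hd
      · rw [dist_comm]
        have h4 : dist (p (E v)) v = dist (p (E v)) (q (E v)) := congrArg (dist (p (E v))) hv2
        exact h4.trans_le hd
    exact (dist_triangle v (p (E v)) _).trans (add_le_add hvb (hn _))
end

section
/- Let (V,d) be a nonempty finite metric space, G a simple graph on V, and let V be partitioned into two disjoint sets B (blue) and P (purple) with B nonempty. Suppose there exists at least one B-saturating matching, i.e., an injective map M : B → P such that b is G-adjacent to M(b) for every b in B. Let w0 be the minimum over all B-saturating matchings M of max over b in B of d(b, M(b)), and let R be the minimum radius over all k-clusterings of (V,d). Then there exist a k-clustering (σ, c) of (V,d) and a B-saturating matching M such that σ(M(b)) = σ(b) for every b in B, and the radius of (σ, c) is at most w0 + R. -/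
/-- `M` is a `B`-saturating matching: an injective map from `B` into `P` matching each blue
vertex to a `G`-adjacent purple vertex. -/
def IsSatMatching {V : Type*} (G : SimpleGraph V) (B P : Set V) (M : B → V) : Prop :=
  (∀ b : B, M b ∈ P) ∧ Function.Injective M ∧ ∀ b : B, G.Adj (b : V) (M b)

/-- There exist a `k`-clustering and a `B`-saturating matching whose matched pairs are all
co-clustered, with radius at most `w0 + R`, where `w0` is the bottleneck `B`-saturating
matching value and `R` the optimal `k`-center radius. -/
theorem fairness_clustering_exists {V : Type*} [MetricSpace V] [Fintype V] [Nonempty V]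
    (G : SimpleGraph V) (B P : Set V) (hdisj : Disjoint B P) (hpart : B ∪ P = Set.univ)
    (hB : B.Nonempty) (k : ℕ) (hk : 1 ≤ k)
    (hexists : ∃ M : B → V, IsSatMatching G B P M) :
    ∃ (σ : V → Fin k) (c : Fin k → V) (M : B → V), IsSatMatching G B P M ∧
      (∀ b : B, σ (M b) = σ (b : V)) ∧
      (⨆ v : V, dist v (c (σ v))) ≤
        sInf {x : ℝ | ∃ M' : B → V, IsSatMatching G B P M' ∧
            x = ⨆ b : B, dist (b : V) (M' b)} +
          sInf {r : ℝ | ∃ (σ' : V → Fin k) (c' : Fin k → V),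
            r = ⨆ v : V, dist v (c' (σ' v))} := by
  classical
  have h1 : sInf {x : ℝ | ∃ M' : B → V, IsSatMatching G B P M' ∧
            x = ⨆ b : B, dist (b : V) (M' b)} ∈ {x : ℝ | ∃ M' : B → V, IsSatMatching G B P M' ∧
            x = ⨆ b : B, dist (b : V) (M' b)} := by
    apply Set.Nonempty.csInf_mem
    · obtain ⟨M, hM⟩ := hexists
      exact ⟨_, M, hM, rfl⟩
    · refine (Set.finite_range (fun M' : B → V => ⨆ b : B, dist (b : V) (M' b))).subset ?_
      rintro x ⟨M', -, rfl⟩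
      exact ⟨M', rfl⟩
  have h2 : sInf {r : ℝ | ∃ (σ' : V → Fin k) (c' : Fin k → V),
            r = ⨆ v : V, dist v (c' (σ' v))} ∈ {r : ℝ | ∃ (σ' : V → Fin k) (c' : Fin k → V),
            r = ⨆ v : V, dist v (c' (σ' v))} := by
    apply Set.Nonempty.csInf_mem
    · exact ⟨_, fun _ => ⟨0, hk⟩, fun _ => Classical.arbitrary V, rfl⟩
    · refine (Set.finite_range (fun q : (V → Fin k) × (Fin k → V) =>
        ⨆ v : V, dist v (q.2 (q.1 v)))).subset ?_
      rintro x ⟨s, c, rfl⟩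
      exact ⟨(s, c), rfl⟩
  obtain ⟨M, hM, hw⟩ := h1
  obtain ⟨s, c, hr⟩ := h2
  rw [hw, hr]
  have hMB : ∀ b : B, M b ∉ B := fun b hb => Set.disjoint_left.mp hdisj hb (hM.1 b)
  have hb1 : ∀ b : B, dist (b : V) (M b) ≤ ⨆ b : B, dist (b : V) (M b) := fun b =>
    le_ciSup (f := fun b : B => dist (b : V) (M b)) (Set.finite_range _).bddAbove b
  have hb2 : ∀ v : V, dist v (c (s v)) ≤ ⨆ v : V, dist v (c (s v)) := fun v =>
    le_ciSup (f := fun v : V => dist v (c (s v))) (Set.finite_range _).bddAbove v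
  have h0 : 0 ≤ ⨆ b : B, dist (b : V) (M b) := Real.iSup_nonneg fun _ => dist_nonneg
  refine ⟨fun v => if h : v ∈ B then s (M ⟨v, h⟩) else s v, c, M, hM, ?_, ?_⟩
  · intro b
    simp [hMB b]
  · apply ciSup_le
    intro v
    by_cases h : v ∈ B
    · simp only [h, dif_pos]
      exact (dist_triangle _ _ _).trans (add_le_add (hb1 ⟨v, h⟩) (hb2 _))
    · simp only [h, dif_neg, not_false_eq_true]
      linarith [hb2 v]
end

section
/- Let (V,d) be a finite metric space, X ⊆ V, and let (σ*, c*) be a k-clustering of (V,d) of radius r* such that for every i in Fin k, the set {x ∈ X : σ*(x) = i} has cardinality exactly m, where m ≥ 1. Then there exist τ : X → Fin k with every fiber of τ of cardinality exactly m, and χ : Fin k → X, such that d(x, χ(τ(x))) ≤ 2 r* for every x in X. -/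
/-- Restricting an optimal balanced clustering of `V` to the expert set `X` yields a balanced
clustering of `X` with centers in `X` of radius at most `2 r`. -/
theorem balanced_restriction_to_experts {V : Type*} [MetricSpace V] [Fintype V]
    (X : Set V) {k : ℕ} (σ : V → Fin k) (c : Fin k → V) (r : ℝ)
    (hr : (⨆ v : V, dist v (c (σ v))) = r)
    (m : ℕ) (hm : 1 ≤ m) (hbal : ∀ i : Fin k, {x : V | x ∈ X ∧ σ x = i}.ncard = m) :
    ∃ (τ : X → Fin k) (χ : Fin k → X),
      (∀ i : Fin k, {x : X | τ x = i}.ncard = m) ∧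
      ∀ x : X, dist (x : V) (χ (τ x) : V) ≤ 2 * r := by
  have hle : ∀ v : V, dist v (c (σ v)) ≤ r := fun v => by
    rw [← hr]
    exact le_ciSup (f := fun v : V => dist v (c (σ v))) (Set.finite_range _).bddAbove v
  have hne : ∀ i : Fin k, ∃ x : X, σ x = i := fun i => by
    have h : {x : V | x ∈ X ∧ σ x = i}.Nonempty := by
      apply Set.nonempty_of_ncard_ne_zero
      rw [hbal i]
      omega
    obtain ⟨x, hx, hi⟩ := h
    exact ⟨⟨x, hx⟩, hi⟩
  choose χ hχ using hne
  refine ⟨fun x => σ x, χ, fun i => ?_, fun x => ?_⟩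
  · rw [← hbal i, ← Set.ncard_image_of_injective _ (Subtype.val_injective (p := (· ∈ X)))]
    congr 1
    ext v
    simp [and_comm]
  · have h1 := hle x
    have h2 := hle (χ (σ x))
    rw [hχ] at h2
    have h3 := dist_triangle_right (x : V) (χ (σ x) : V) (c (σ x))
    show dist (x : V) (χ (σ x) : V) ≤ 2 * r
    linarith
end

section
/- Let (V,d) be a finite metric space, X ⊆ V, k ≥ 1, and α ≥ 1. Suppose there is a k-clustering (σ*, c*) of (V,d) of radius r* such that every cluster contains exactly m ≥ 1 points of X. Let OPT_X denote the minimum radius over all pairs (τ, χ) with τ : X → Fin k having every fiber of cardinality exactly m and χ : Fin k → X, where the radius of (τ, χ) is max over x in X of d(x, χ(τ(x))). Let (τ0, χ0) be such a pair with radius at most α · OPT_X. Then there exists σ : V → Fin k with σ(x) = τ0(x) for every x in X (so every cluster of σ contains exactly m points of X) and d(u, χ0(σ(u))) ≤ (2α + 2) r* for every u in V. -/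
/-- Team-formation makeshift guarantee: from an `α`-approximate balanced `k`-center solution
on the expert set `X`, one obtains a clustering of `V` that is balanced on `X` and whose
radius (w.r.t. the chosen centers) is at most `(2α + 2) r*`, where `r*` is the radius of a
balanced clustering of `V`. -/
theorem team_formation_guarantee {V : Type*} [MetricSpace V] [Fintype V]
    (X : Set V) (k : ℕ) (hk : 1 ≤ k) (α : ℝ) (hα : 1 ≤ α)
    (σstar : V → Fin k) (cstar : Fin k → V) (rstar : ℝ)
    (hrstar : (⨆ v : V, dist v (cstar (σstar v))) = rstar)
    (m : ℕ) (hm : 1 ≤ m)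
    (hbal : ∀ i : Fin k, {x : V | x ∈ X ∧ σstar x = i}.ncard = m)
    (τ0 : X → Fin k) (χ0 : Fin k → X)
    (hτ0bal : ∀ i : Fin k, {x : X | τ0 x = i}.ncard = m)
    (hτ0 : (⨆ x : X, dist (x : V) (χ0 (τ0 x) : V)) ≤
      α * sInf {ρ : ℝ | ∃ (τ : X → Fin k) (χ : Fin k → X),
        (∀ i : Fin k, {x : X | τ x = i}.ncard = m) ∧
        ρ = ⨆ x : X, dist (x : V) (χ (τ x) : V)}) :
    ∃ σ : V → Fin k,
      (∀ x : X, σ (x : V) = τ0 x) ∧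
      (∀ i : Fin k, {x : V | x ∈ X ∧ σ x = i}.ncard = m) ∧
      ∀ u : V, dist u (χ0 (σ u) : V) ≤ (2 * α + 2) * rstar := by
  classical
  have hr : ∀ v : V, dist v (cstar (σstar v)) ≤ rstar := by
    intro v
    rw [← hrstar]
    exact le_ciSup (f := fun v : V => dist v (cstar (σstar v)))
      (Set.finite_range _).bddAbove v
  have hex : ∀ i : Fin k, ∃ x : X, σstar (x : V) = i := by
    intro i
    have h : {x : V | x ∈ X ∧ σstar x = i}.Nonempty := by
      apply Set.nonempty_of_ncard_ne_zero
      rw [hbal i]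
      omega
    obtain ⟨x, hx, hxi⟩ := h
    exact ⟨⟨x, hx⟩, hxi⟩
  choose e he using hex
  have key : ∀ v : V, dist v (e (σstar v) : V) ≤ 2 * rstar := by
    intro v
    have h1 := hr v
    have h2 := hr (e (σstar v) : V)
    rw [he] at h2
    have h3 := dist_triangle_right v (e (σstar v) : V) (cstar (σstar v))
    linarith
  have r0 : 0 ≤ rstar := le_trans dist_nonneg (hr (e ⟨0, hk⟩ : V))
  have fib : ∀ (f : V → Fin k) (i : Fin k),
      {x : V | x ∈ X ∧ f x = i}.ncard = {x : X | f (x : V) = i}.ncard := by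
    intro f i
    rw [← Set.ncard_image_of_injective _ (Subtype.val_injective (p := fun x => x ∈ X))]
    congr 1
    ext x
    simp [and_comm]
  have hne : Nonempty X := ⟨e ⟨0, hk⟩⟩
  have hopt : sInf {ρ : ℝ | ∃ (τ : X → Fin k) (χ : Fin k → X),
        (∀ i : Fin k, {x : X | τ x = i}.ncard = m) ∧
        ρ = ⨆ x : X, dist (x : V) (χ (τ x) : V)} ≤ 2 * rstar := by
    refine le_trans (csInf_le ⟨0, ?_⟩
      ⟨fun x => σstar x, e, fun i => (fib σstar i).symm.trans (hbal i), rfl⟩) ?_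
    · rintro ρ ⟨τ, χ, -, rfl⟩
      exact Real.iSup_nonneg fun x => dist_nonneg
    · exact ciSup_le fun x => key x
  have h0 : ∀ x : X, dist (x : V) (χ0 (τ0 x) : V) ≤ α * (2 * rstar) := by
    intro x
    refine le_trans ?_ (hτ0.trans (mul_le_mul_of_nonneg_left hopt (by linarith)))
    exact le_ciSup (f := fun x : X => dist (x : V) (χ0 (τ0 x) : V))
      (Set.finite_range _).bddAbove x
  have hs : ∀ x : X, (fun u : V => if h : u ∈ X then τ0 ⟨u, h⟩ else τ0 (e (σstar u))) (x : V)
      = τ0 x := by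
    intro x
    simp
  refine ⟨fun u => if h : u ∈ X then τ0 ⟨u, h⟩ else τ0 (e (σstar u)), hs, ?_, ?_⟩
  · intro i
    rw [fib, ← hτ0bal i]
    congr 1
    ext x
    simp
  · intro u
    by_cases h : u ∈ X
    · simp only [h, dite_true]
      have := h0 ⟨u, h⟩
      simp only at this
      linarith
    · simp only [h, dite_false]
      have h1 := h0 (e (σstar u))
      have h2 := key u
      have h3 := dist_triangle u (e (σstar u) : V) (χ0 (τ0 (e (σstar u))) : V)
      linarith
end
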